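/- Let β = 8/75, let X be large, write ℒ = log X, and for j ≥ 1 let P_j = {(y₁,…,y_j) ∈ ℝ^j : β ≤ y_j < y_{j−1} < ⋯ < y₁ and y₁ + ⋯ + y_{j−1} + 2y_j ≤ 1 + (log 3)/ℒ}. Let E ⊆ P_j and let k be an integer with j+1 ≤ k ≤ 9. Define S_k*(E) as the sum of 1/(p₁⋯p_{k−1}) over all tuples of primes p₁ > p₂ > ⋯ > p_j and p_j ≤ p_{j+1} ≤ ⋯ ≤ p_{k−1} such that (log p₁/ℒ, …, log p_j/ℒ) ∈ E and X/8 < p₁ p₂ ⋯ p_{k−1} · p_{k−1} ≤ X. Then there is an absolute constant C (independent of X, E) with S_k*(E) ≤ C/ℒ. -/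

import Mathlib

open Real

/-- The polytope `P_j = {y : β ≤ y_j < ⋯ < y₁, y₁ + ⋯ + y_{j−1} + 2y_j ≤ 1 + log 3/ℒ}`
with `β = 8/75` and `ℒ = log X` (0-indexed, so the last coordinate is `y_j`). -/
def Pset (X : ℝ) (j : ℕ) : Set (Fin j → ℝ) :=
  {y | (∀ i₁ i₂ : Fin j, i₁ < i₂ → y i₂ < y i₁) ∧
       ∀ i : Fin j, (i : ℕ) = j - 1 →
         8/75 ≤ y i ∧ (∑ i', y i') + y i ≤ 1 + Real.log 3 / Real.log X}

/-- `SkSumStar X j k E` is the sum of `1/(p₁⋯p_{k−1})` over tuples of primes with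
`p₁ > ⋯ > p_j`, `p_j ≤ p_{j+1} ≤ ⋯ ≤ p_{k−1}`,
`(log p₁/ℒ, …, log p_j/ℒ) ∈ E` and `X/8 < p₁⋯p_{k−1}·p_{k−1} ≤ X`. -/
noncomputable def SkSumStar (X : ℝ) (j k : ℕ) (E : Set (Fin j → ℝ)) : ℝ :=
  ∑' p : {p : Fin (k-1) → ℕ //
      (∀ i, (p i).Prime) ∧
      (∀ i₁ i₂ : Fin (k-1), i₁ < i₂ → (i₂ : ℕ) < j → p i₂ < p i₁) ∧
      (∀ i₁ i₂ : Fin (k-1), j - 1 ≤ (i₁ : ℕ) → i₁ ≤ i₂ → p i₁ ≤ p i₂) ∧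
      (∀ h : j ≤ k - 1,
        (fun i : Fin j => Real.log (p (Fin.castLE h i)) / Real.log X) ∈ E) ∧
      (∀ i : Fin (k-1), (i : ℕ) = k - 2 →
        X / 8 < (((∏ i', p i') * p i : ℕ) : ℝ) ∧ (((∏ i', p i') * p i : ℕ) : ℝ) ≤ X)},
    1 / ∏ i, (p.1 i : ℝ)


/-- dyadic bound for the sum of `log p / p`. -/
lemma aux_dyadic (N : ℕ) :
    ∑ p ∈ (Finset.range (2 ^ N)).filter Nat.Prime, Real.log p / p ≤ N * (2 * Real.log 4) := by
  induction N with
  | zero => simp [Finset.sum_filter, Nat.not_prime_zero]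
  | succ N ih =>
    have hsub : (Finset.range (2 ^ (N + 1))).filter Nat.Prime ⊆
        (Finset.range (2 ^ N)).filter Nat.Prime ∪
        (Finset.Ico (2 ^ N) (2 ^ (N + 1))).filter Nat.Prime := by
      intro p hp
      simp only [Finset.mem_filter, Finset.mem_range, Finset.mem_union, Finset.mem_Ico] at hp ⊢
      rcases lt_or_ge p (2 ^ N) with h | h
      · exact Or.inl ⟨h, hp.2⟩
      · exact Or.inr ⟨⟨h, hp.1⟩, hp.2⟩
    have hnn : ∀ p : ℕ, 0 ≤ Real.log p / p := fun p =>
      div_nonneg (Real.log_natCast_nonneg p) (Nat.cast_nonneg p)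
    have h1 : ∑ p ∈ (Finset.range (2 ^ (N + 1))).filter Nat.Prime, Real.log p / p ≤
        ∑ p ∈ (Finset.range (2 ^ N)).filter Nat.Prime, Real.log p / p +
        ∑ p ∈ (Finset.Ico (2 ^ N) (2 ^ (N + 1))).filter Nat.Prime, Real.log p / p := by
      refine (Finset.sum_le_sum_of_subset_of_nonneg hsub (fun p _ _ => hnn p)).trans ?_
      rw [← Finset.sum_union_inter]
      exact le_add_of_nonneg_right (Finset.sum_nonneg fun p _ => hnn p)
    have h2 : ∑ p ∈ (Finset.Ico (2 ^ N) (2 ^ (N + 1))).filter Nat.Prime, Real.log p / p ≤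
        2 * Real.log 4 := by
      have hpos : (0 : ℝ) < 2 ^ N := by positivity
      calc _ ≤ ∑ p ∈ (Finset.Ico (2 ^ N) (2 ^ (N + 1))).filter Nat.Prime,
              Real.log p / 2 ^ N := by
            refine Finset.sum_le_sum fun p hp => ?_
            simp only [Finset.mem_filter, Finset.mem_Ico] at hp
            have : (2 ^ N : ℝ) ≤ p := by exact_mod_cast hp.1.1
            exact div_le_div_of_nonneg_left (Real.log_natCast_nonneg p) hpos this
        _ = (∑ p ∈ (Finset.Ico (2 ^ N) (2 ^ (N + 1))).filter Nat.Prime,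
              Real.log p) / 2 ^ N := by rw [Finset.sum_div]
        _ ≤ Chebyshev.theta (2 ^ (N + 1)) / 2 ^ N := by
            gcongr
            rw [Chebyshev.theta]
            refine Finset.sum_le_sum_of_subset_of_nonneg ?_
              (fun p _ _ => Real.log_natCast_nonneg p)
            intro p hp
            have hf : ⌊(2 : ℝ) ^ (N + 1)⌋₊ = 2 ^ (N + 1) := by
              have := Nat.floor_natCast (R := ℝ) (2 ^ (N + 1))
              push_cast at this
              exact this
            simp only [Finset.mem_filter, Finset.mem_Ico, Finset.mem_Ioc, hf] at hp ⊢
            exact ⟨⟨hp.2.pos, hp.1.2.le⟩, hp.2⟩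
        _ ≤ (Real.log 4 * 2 ^ (N + 1)) / 2 ^ N := by
            gcongr
            exact Chebyshev.theta_le_log4_mul_x (by positivity)
        _ = 2 * Real.log 4 := by
            rw [pow_succ]; field_simp
    push_cast
    linarith

/-- primes between `X^β` and `X`. -/
noncomputable def auxA (X : ℝ) : Finset ℕ :=
  (Finset.range (⌊X⌋₊ + 1)).filter fun p => p.Prime ∧ 8 / 75 * Real.log X ≤ Real.log p

lemma aux_A_sum (X : ℝ) (hX : 2 ≤ X) : ∑ p ∈ auxA X, 1 / (p : ℝ) ≤ 75 := by
  have hL : 0 < Real.log X := Real.log_pos (by linarith)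
  have hl2 : 0 < Real.log 2 := Real.log_pos (by norm_num)
  have hl4 : Real.log 4 = 2 * Real.log 2 := by
    rw [show (4 : ℝ) = 2 ^ 2 by norm_num, Real.log_pow]; norm_num
  have hfl : ⌊X⌋₊ ≠ 0 := by
    have : 1 ≤ ⌊X⌋₊ := Nat.le_floor (by push_cast; linarith)
    omega
  set n := Nat.log 2 ⌊X⌋₊ with hn
  have hnX : (2 : ℝ) ^ n ≤ X := by
    have h := Nat.pow_log_le_self 2 hfl
    have h' : ((2 ^ n : ℕ) : ℝ) ≤ (⌊X⌋₊ : ℝ) := by exact_mod_cast h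
    push_cast at h'
    exact h'.trans (Nat.floor_le (by linarith))
  have hnlog : n * Real.log 2 ≤ Real.log X := by
    rw [← Real.log_pow]
    exact Real.log_le_log (by positivity) hnX
  have hl2X : Real.log 2 ≤ Real.log X := Real.log_le_log (by norm_num) hX
  have hd := aux_dyadic (n + 1)
  push_cast at hd
  rw [hl4] at hd
  have hd2 : ∑ p ∈ (Finset.range (2 ^ (n + 1))).filter Nat.Prime, Real.log p / p ≤
      8 * Real.log X := by linarith
  have h3 : ∑ p ∈ auxA X, Real.log p / p ≤ 8 * Real.log X := by
    refine (Finset.sum_le_sum_of_subset_of_nonneg ?_ (fun p _ _ =>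
      div_nonneg (Real.log_natCast_nonneg p) (Nat.cast_nonneg p))).trans hd2
    intro p hp
    simp only [auxA, Finset.mem_filter, Finset.mem_range] at hp ⊢
    refine ⟨?_, hp.2.1⟩
    have := Nat.lt_pow_succ_log_self (b := 2) (by norm_num) ⌊X⌋₊
    rw [Nat.succ_eq_add_one, ← hn] at this
    omega
  have h4 : (8 / 75 * Real.log X) * ∑ p ∈ auxA X, 1 / (p : ℝ) ≤ 8 * Real.log X := by
    refine le_trans ?_ h3
    rw [Finset.mul_sum]
    refine Finset.sum_le_sum fun p hp => ?_
    simp only [auxA, Finset.mem_filter] at hp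
    rw [mul_one_div]
    have := hp.2.2
    gcongr
  by_contra hc
  push Not at hc
  nlinarith

/-- the sum over the last prime. -/
lemma aux_last (X M : ℝ) (hX : 2 ≤ X) (hM : 0 < M) (B : Finset ℕ)
    (hB : ∀ r ∈ B, r ∈ auxA X ∧ X / 8 < M * r * r ∧ M * r * r ≤ X) :
    ∑ r ∈ B, 1 / (r : ℝ) ≤ (3 * Real.log 4 * (75 / 8)) / Real.log X := by
  have hL : 0 < Real.log X := Real.log_pos (by linarith)
  set Y := Real.sqrt (X / M) with hY
  have hYpos : 0 < Y := Real.sqrt_pos.mpr (by positivity)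
  have hYsq : Y * Y = X / M := Real.mul_self_sqrt (by positivity)
  have hle : ∀ r ∈ B, (r : ℝ) ≤ Y := by
    intro r hr
    apply Real.le_sqrt_of_sq_le
    rw [le_div_iff₀ hM]
    have := (hB r hr).2.2
    nlinarith
  have hge : ∀ r ∈ B, Y / 3 ≤ (r : ℝ) := by
    intro r hr
    have h1 := (hB r hr).2.1
    have h2 : X = Y * Y * M := by rw [hYsq]; field_simp
    by_contra hc
    push Not at hc
    have hr0 : (0 : ℝ) ≤ r := Nat.cast_nonneg r
    have h3 : (r : ℝ) * r ≤ Y / 3 * (Y / 3) := by gcongr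
    have h4 : M * ((r : ℝ) * r) ≤ M * (Y / 3 * (Y / 3)) := by gcongr
    have h5 : 0 < Y * Y * M := by positivity
    nlinarith
  have h1 : ∀ r ∈ B, 1 / (r : ℝ) ≤ (3 / Y * (75 / 8) / Real.log X) * Real.log r := by
    intro r hr
    have hm := (hB r hr).1
    simp only [auxA, Finset.mem_filter] at hm
    have hlog := hm.2.2
    have h3 := hge r hr
    have a1 : 1 / (r : ℝ) ≤ 3 / Y := by
      calc 1 / (r : ℝ) ≤ 1 / (Y / 3) := one_div_le_one_div_of_le (by positivity) h3
        _ = 3 / Y := by field_simp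
    have a2 : 1 ≤ (75 / 8) / Real.log X * Real.log r := by
      rw [div_mul_eq_mul_div, le_div_iff₀ hL]; linarith
    calc 1 / (r : ℝ) ≤ 3 / Y * 1 := by simpa using a1
      _ ≤ 3 / Y * ((75 / 8) / Real.log X * Real.log r) := by gcongr
      _ = _ := by ring
  have h2 : ∑ r ∈ B, Real.log r ≤ Real.log 4 * Y := by
    refine le_trans ?_ (Chebyshev.theta_le_log4_mul_x hYpos.le)
    rw [Chebyshev.theta]
    refine Finset.sum_le_sum_of_subset_of_nonneg ?_ (fun p _ _ => Real.log_natCast_nonneg p)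
    intro r hr
    have hm := (hB r hr).1
    simp only [auxA, Finset.mem_filter] at hm
    simp only [Finset.mem_filter, Finset.mem_Ioc]
    exact ⟨⟨hm.2.1.pos, Nat.le_floor (hle r hr)⟩, hm.2.1⟩
  calc _ ≤ ∑ r ∈ B, (3 / Y * (75 / 8) / Real.log X) * Real.log r := Finset.sum_le_sum h1
    _ = (3 / Y * (75 / 8) / Real.log X) * ∑ r ∈ B, Real.log r := by rw [Finset.mul_sum]
    _ ≤ (3 / Y * (75 / 8) / Real.log X) * (Real.log 4 * Y) := by gcongr
    _ = _ := by field_simp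

lemma aux_sum (X : ℝ) (hX : 2 ≤ X) (m : ℕ) (T : Finset (Fin (m + 1) → ℕ))
    (hT : ∀ p ∈ T, (∀ i, p i ∈ auxA X) ∧
      X / 8 < (((∏ i', p i') * p (Fin.last m) : ℕ) : ℝ) ∧
      (((∏ i', p i') * p (Fin.last m) : ℕ) : ℝ) ≤ X) :
    ∑ p ∈ T, 1 / ∏ i, (p i : ℝ) ≤ 75 ^ m * ((3 * Real.log 4 * (75 / 8)) / Real.log X) := by
  classical
  have hL : 0 < Real.log X := Real.log_pos (by linarith)
  have hl4 : 0 < Real.log 4 := Real.log_pos (by norm_num)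
  set c := (3 * Real.log 4 * (75 / 8)) / Real.log X with hc
  have hc0 : 0 < c := by positivity
  set Q : Finset (Fin m → ℕ) := Fintype.piFinset fun _ => auxA X with hQ
  have hmap : ∀ p ∈ T, (fun i : Fin m => p i.castSucc) ∈ Q := by
    intro p hp
    rw [hQ, Fintype.mem_piFinset]
    exact fun i => (hT p hp).1 _
  rw [← Finset.sum_fiberwise_of_maps_to hmap]
  have key : ∀ q ∈ Q, ∑ p ∈ T with (fun i : Fin m => p i.castSucc) = q, 1 / ∏ i, (p i : ℝ) ≤
      (∏ i, 1 / (q i : ℝ)) * c := by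
    intro q hq
    have hqpos : ∀ i, 0 < (q i : ℝ) := by
      intro i
      have := (Fintype.mem_piFinset.mp hq) i
      simp only [auxA, Finset.mem_filter] at this
      exact_mod_cast this.2.1.pos
    have e1 : ∑ p ∈ T with (fun i : Fin m => p i.castSucc) = q, 1 / ∏ i, (p i : ℝ) =
        (∏ i, 1 / (q i : ℝ)) *
          ∑ p ∈ T with (fun i : Fin m => p i.castSucc) = q, 1 / (p (Fin.last m) : ℝ) := by
      rw [Finset.mul_sum]
      refine Finset.sum_congr rfl fun p hp => ?_
      have hpq := (Finset.mem_filter.mp hp).2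
      subst hpq
      rw [Fin.prod_univ_castSucc, Finset.prod_div_distrib, Finset.prod_const_one]
      field_simp
    rw [e1]
    refine mul_le_mul_of_nonneg_left ?_ (Finset.prod_nonneg fun i _ => by positivity)
    have hinj : Set.InjOn (fun p : Fin (m + 1) → ℕ => p (Fin.last m))
        ((T.filter fun p => (fun i : Fin m => p i.castSucc) = q) : Finset _) := by
      intro p hp p' hp' h
      have h1 := (Finset.mem_filter.mp (Finset.mem_coe.mp hp)).2
      have h2 := (Finset.mem_filter.mp (Finset.mem_coe.mp hp')).2
      funext i
      refine Fin.lastCases h (fun i => ?_) i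
      exact congrFun (h1.trans h2.symm) i
    have e2 := Finset.sum_image (f := fun r : ℕ => 1 / (r : ℝ)) hinj
    rw [← e2]
    refine aux_last X (∏ i, (q i : ℝ)) hX (Finset.prod_pos fun i _ => hqpos i) _ ?_
    intro r hr
    obtain ⟨p, hp, rfl⟩ := Finset.mem_image.mp hr
    obtain ⟨hpT, hpq⟩ := Finset.mem_filter.mp hp
    obtain ⟨h1, h2, h3⟩ := hT p hpT
    subst hpq
    rw [Fin.prod_univ_castSucc] at h2 h3
    push_cast at h2 h3
    exact ⟨h1 _, h2, h3⟩
  refine (Finset.sum_le_sum key).trans ?_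
  rw [← Finset.sum_mul]
  refine mul_le_mul_of_nonneg_right ?_ hc0.le
  have e3 := Finset.prod_univ_sum (fun _ : Fin m => auxA X) (fun _ r => 1 / (r : ℝ))
  rw [← e3, Finset.prod_const, Finset.card_univ, Fintype.card_fin]
  exact pow_le_pow_left₀ (Finset.sum_nonneg fun i _ => by positivity) (aux_A_sum X hX) m

theorem lemma22ii :
    ∃ C > 0, ∃ X₀ : ℝ, ∀ X : ℝ, X₀ ≤ X →
    ∀ j : ℕ, 1 ≤ j → ∀ k : ℕ, j + 1 ≤ k → k ≤ 9 →
    ∀ E : Set (Fin j → ℝ), E ⊆ Pset X j →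
    SkSumStar X j k E ≤ C / Real.log X := by
  have hl4 : 0 < Real.log 4 := Real.log_pos (by norm_num)
  refine ⟨75 ^ 9 * (3 * Real.log 4 * (75 / 8)), by positivity, 2, ?_⟩
  intro X hX j hj k hjk hk E hE
  have hL : 0 < Real.log X := Real.log_pos (by linarith)
  obtain ⟨m, rfl⟩ : ∃ m, k = m + 2 := ⟨k - 2, by omega⟩
  rw [SkSumStar]
  refine Real.tsum_le_of_sum_le (fun p => by positivity) ?_
  intro s
  have hs := aux_sum X hX m (s.map (Function.Embedding.subtype _)) ?_
  · rw [Finset.sum_map] at hs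
    refine le_trans hs ?_
    rw [mul_div_assoc (75 ^ 9)]
    refine mul_le_mul_of_nonneg_right ?_ (by positivity)
    exact pow_le_pow_right₀ (by norm_num) (by omega)
  · intro p hp
    obtain ⟨⟨p', hpr, hdec, hinc, hmem, hsz⟩, -, rfl⟩ := Finset.mem_map.mp hp
    have hsz' := hsz (Fin.last m) (by simp)
    refine ⟨fun i => ?_, hsz'⟩
    change p' i ∈ auxA X
    simp only [auxA, Finset.mem_filter, Finset.mem_range]
    have hjm : j ≤ m + 1 := by omega
    refine ⟨?_, hpr i, ?_⟩
    · have hd : p' i ∣ (∏ i', p' i') * p' (Fin.last m) :=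
        Dvd.dvd.mul_right (Finset.dvd_prod_of_mem p' (Finset.mem_univ i)) _
      have hpos : 0 < (∏ i', p' i') * p' (Fin.last m) :=
        Nat.mul_pos (Finset.prod_pos fun i _ => (hpr i).pos) (hpr _).pos
      have h1 := Nat.le_of_dvd hpos hd
      have h2 : ((p' i : ℕ) : ℝ) ≤ X := le_trans (by exact_mod_cast h1) hsz'.2
      have := Nat.le_floor h2
      omega
    · have hP := (hE (hmem hjm)).2 ⟨j - 1, by omega⟩ rfl
      have h1 := hP.1
      rw [le_div_iff₀ hL] at h1
      refine h1.trans (Real.log_le_log (by exact_mod_cast (hpr _).pos) ?_)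
      have : p' (Fin.castLE hjm ⟨j - 1, by omega⟩) ≤ p' i := by
        rcases lt_or_ge (i : ℕ) (j - 1) with h | h
        · exact (hdec i _ (by simpa [Fin.lt_def] using h) (by simp; omega)).le
        · exact hinc _ i (by simp) (by simpa [Fin.le_def] using h)
      exact_mod_cast this
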